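/- Let ε = (εₙ)_{n∈ℤ} ∈ ℓ²(ℤ) be a real sequence such that τₙ := π(n − 1/2) + εₙ is strictly increasing in n ∈ ℤ. Then for each n ∈ ℤ the symmetric limit bₙ := lim_{N→∞} Σ_{j: 1 ≤ |j−n| ≤ N} log( (τⱼ − τₙ) / (π(j−n)) ) exists (each ratio (τⱼ − τₙ)/(π(j−n)) is positive), and the sequence (bₙ)_{n∈ℤ} belongs to ℓ²(ℤ). -/

import Mathlib

open Filter Topology

noncomputable section

/-- `u m = 1/m`, with `u 0 = 0`. -/
def uu (m : ℤ) : ℝ := ((m : ℝ))⁻¹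

lemma uu_zero : uu 0 = 0 := by simp [uu]

lemma uu_neg (m : ℤ) : uu (-m) = - uu m := by simp [uu, inv_neg]

lemma uu_sq_summable : Summable (fun m : ℤ => uu m ^ 2) := by
  have h := (Real.summable_one_div_int_pow (p := 2)).2 (by norm_num)
  refine h.congr fun m => ?_
  simp [uu]

lemma uu_mul (j k n : ℤ) (hjk : j ≠ k) : uu (j - n) * uu (k - n) =
    uu (k - j) * (uu (j - n) - uu (k - n)) + (if n = j then uu (k - j) ^ 2 else 0)
      + (if n = k then uu (k - j) ^ 2 else 0) := by
  by_cases h1 : n = j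
  · subst h1
    simp only [sub_self, uu_zero, if_true, if_neg hjk]; ring
  · by_cases h2 : n = k
    · subst h2
      have : uu (j - n) = - uu (n - j) := by rw [← uu_neg]; congr 1; ring
      simp only [sub_self, uu_zero, if_true, if_neg h1, this]; ring
    · simp only [if_neg h1, if_neg h2, uu]
      have e1 : ((j : ℝ) - n) ≠ 0 := sub_ne_zero.2 (by exact_mod_cast (Ne.symm h1))
      have e2 : ((k : ℝ) - n) ≠ 0 := sub_ne_zero.2 (by exact_mod_cast (Ne.symm h2))
      have e3 : ((k : ℝ) - j) ≠ 0 := sub_ne_zero.2 (by exact_mod_cast (Ne.symm hjk))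
      push_cast
      field_simp
      ring

lemma uu_tendsto : Tendsto (fun n : ℕ => uu (n : ℤ)) atTop (𝓝 0) := by
  simpa [uu] using tendsto_inv_atTop_nhds_zero_nat (𝕜 := ℝ)

lemma uu_prod_summable (j k : ℤ) : Summable (fun n : ℤ => uu (j - n) * uu (k - n)) := by
  have h1 : ∀ j : ℤ, Summable (fun n : ℤ => uu (j - n) ^ 2) := fun j =>
    ((Equiv.subLeft j).summable_iff (f := fun m : ℤ => uu m ^ 2)).2 uu_sq_summable
  refine Summable.of_norm_bounded ((h1 j).add (h1 k)) fun n => ?_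
  rw [Real.norm_eq_abs, abs_le]
  constructor <;> nlinarith [sq_nonneg (uu (j - n) + uu (k - n)), sq_nonneg (uu (j - n) - uu (k - n)),
    sq_nonneg (uu (j - n)), sq_nonneg (uu (k - n))]

lemma uu_diff_summable (j k : ℤ) : Summable (fun n : ℤ => uu (j - n) - uu (k - n)) := by
  by_cases hjk : j = k
  · subst hjk; simp
  have e3 : uu (k - j) ≠ 0 := by
    simp only [uu]
    exact inv_ne_zero (by exact_mod_cast (sub_ne_zero.2 (Ne.symm hjk)))
  have hA : ∀ (i : ℤ) (c : ℝ), Summable (fun n : ℤ => if n = i then c else 0) := fun i c =>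
    (hasSum_ite_eq i c).summable
  have := (((uu_prod_summable j k).sub (hA j (uu (k - j) ^ 2))).sub (hA k (uu (k - j) ^ 2))).mul_left
    (uu (k - j))⁻¹
  refine this.congr fun n => ?_
  rw [uu_mul j k n hjk]
  field_simp
  ring

lemma hasSum_cast {f g : ℤ → ℝ} {s t : ℝ} (h : HasSum f s) (h1 : ∀ n, g n = f n) (h2 : t = s) :
    HasSum g t := by
  rw [h2, funext h1]; exact h

lemma uu_one : HasSum (fun n : ℤ => uu (n + 1) - uu n) 0 := by
  have hs : Summable (fun n : ℤ => uu (n + 1) - uu n) := by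
    have := ((Equiv.neg ℤ).summable_iff (f := fun n : ℤ => uu (1 - n) - uu (0 - n))).2
      (uu_diff_summable 1 0)
    refine this.congr fun n => ?_
    simp [add_comm]
  have h1 : HasSum (fun n : ℕ => uu ((n : ℤ) + 1) - uu n) 0 := by
    have hs1 : Summable (fun n : ℕ => uu ((n : ℤ) + 1) - uu n) :=
      hs.comp_injective Nat.cast_injective
    rw [hs1.hasSum_iff_tendsto_nat]
    have : ∀ N : ℕ, ∑ n ∈ Finset.range N, (uu ((n : ℤ) + 1) - uu n) = uu N := by
      intro N
      have := Finset.sum_range_sub (fun n : ℕ => uu (n : ℤ)) N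
      simp only [Nat.cast_add, Nat.cast_one, Nat.cast_zero, uu_zero, sub_zero] at this
      exact this
    simp only [this]
    exact uu_tendsto
  have h2 : HasSum (fun n : ℕ => uu (-((n : ℤ) + 1) + 1) - uu (-((n : ℤ) + 1))) 0 := by
    refine h1.congr_fun ?_ |> id
    intro n
    rw [uu_neg, show (-((n : ℤ) + 1) + 1) = -(n : ℤ) by ring, uu_neg]
    ring
  have := HasSum.of_nat_of_neg_add_one (f := fun n : ℤ => uu (n + 1) - uu n) h1 h2
  simpa using this

lemma uu_shift (d : ℤ) : HasSum (fun n : ℤ => uu (n + d) - uu n) 0 := by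
  induction d using Int.induction_on with
  | zero => simp
  | succ i ih =>
    have h := ((Equiv.addRight (i : ℤ)).hasSum_iff (f := fun n : ℤ => uu (n + 1) - uu n)).2 uu_one
    have := ih.add h
    rw [add_zero] at this
    refine hasSum_cast this (fun n => ?_) rfl
    simp [add_assoc]
  | pred i ih =>
    have h := ((Equiv.addRight (-(i : ℤ) - 1)).hasSum_iff
      (f := fun n : ℤ => uu (n + 1) - uu n)).2 uu_one
    have := ih.sub h
    rw [sub_zero] at this
    refine hasSum_cast this (fun n => ?_) rfl
    simp [add_assoc]

lemma uu_diff_hasSum (j k : ℤ) : HasSum (fun n : ℤ => uu (j - n) - uu (k - n)) 0 := by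
  have h := ((Equiv.subLeft k).hasSum_iff (f := fun n : ℤ => uu (n + (j - k)) - uu n)).2
    (uu_shift (j - k))
  refine hasSum_cast h (fun n => ?_) rfl
  simp

/-- the sum of `1/m^2` over the nonzero integers -/
def SS : ℝ := ∑' m : ℤ, uu m ^ 2

lemma uu_prod_hasSum (j k : ℤ) : HasSum (fun n : ℤ => uu (j - n) * uu (k - n))
    ((if k = j then SS else 0) + 2 * uu (k - j) ^ 2) := by
  by_cases hjk : k = j
  · subst hjk
    have := ((Equiv.subLeft k).hasSum_iff (f := fun m : ℤ => uu m ^ 2)).2 uu_sq_summable.hasSum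
    simp only [if_true, sub_self, uu_zero]
    refine hasSum_cast this (fun n => ?_) ?_
    · simp [sq]
    · simp [SS]
  · have h := (((uu_diff_hasSum j k).mul_left (uu (k - j))).add
      (hasSum_ite_eq j (uu (k - j) ^ 2))).add (hasSum_ite_eq k (uu (k - j) ^ 2))
    refine hasSum_cast h (fun n => ?_) ?_
    · exact uu_mul j k n (Ne.symm hjk)
    · simp [hjk]; ring

lemma kernel_row (j : ℤ) (F : Finset ℤ) :
    ∑ k ∈ F, ((if k = j then SS else 0) + 2 * uu (k - j) ^ 2) ≤ 3 * SS := by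
  have h := (hasSum_ite_eq j SS).add
    ((((Equiv.subRight j).hasSum_iff (f := fun m : ℤ => uu m ^ 2)).2 uu_sq_summable.hasSum).mul_left 2)
  have hS : 0 ≤ SS := tsum_nonneg fun m => sq_nonneg _
  have := sum_le_hasSum F (fun k _ => by
    simp only [Function.comp]
    split_ifs <;> positivity) h
  refine this.trans (le_of_eq ?_)
  change SS + 2 * SS = _
  ring

lemma hilbert_fin (a : ℤ → ℝ) (F G : Finset ℤ) :
    ∑ n ∈ G, (∑ j ∈ F, a j * uu (j - n)) ^ 2 ≤ 3 * SS * ∑ j ∈ F, a j ^ 2 := by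
  set M : ℤ → ℤ → ℝ := fun j k => (if k = j then SS else 0) + 2 * uu (k - j) ^ 2 with hM
  have hS : 0 ≤ SS := tsum_nonneg fun m => sq_nonneg _
  have hM0 : ∀ j k, 0 ≤ M j k := fun j k => by
    simp only [hM]; split_ifs <;> positivity
  have hMs : ∀ j k, M j k = M k j := fun j k => by
    simp only [hM]
    rw [show k - j = -(j - k) by ring, uu_neg]
    simp [eq_comm]
  have h : HasSum (fun n : ℤ => (∑ j ∈ F, a j * uu (j - n)) ^ 2)
      (∑ j ∈ F, ∑ k ∈ F, a j * a k * M j k) := by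
    have := hasSum_sum (s := F) fun j _ => hasSum_sum (s := F) fun k _ =>
      (uu_prod_hasSum j k).mul_left (a j * a k)
    refine hasSum_cast this (fun n => ?_) rfl
    rw [sq, Finset.sum_mul_sum]
    refine Finset.sum_congr rfl fun j _ => Finset.sum_congr rfl fun k _ => ?_
    ring
  refine (sum_le_hasSum G (fun n _ => sq_nonneg _) h).trans ?_
  calc ∑ j ∈ F, ∑ k ∈ F, a j * a k * M j k
      ≤ ∑ j ∈ F, ∑ k ∈ F, (a j ^ 2 / 2 * M j k + a k ^ 2 / 2 * M j k) := by
        refine Finset.sum_le_sum fun j _ => Finset.sum_le_sum fun k _ => ?_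
        nlinarith [mul_nonneg (hM0 j k) (sq_nonneg (a j - a k))]
    _ = ∑ j ∈ F, a j ^ 2 * ∑ k ∈ F, M j k := by
        simp only [Finset.sum_add_distrib]
        rw [Finset.sum_comm (f := fun j k => a k ^ 2 / 2 * M j k), ← Finset.sum_add_distrib]
        refine Finset.sum_congr rfl fun j _ => ?_
        rw [← Finset.sum_add_distrib, Finset.mul_sum]
        refine Finset.sum_congr rfl fun k _ => ?_
        rw [hMs k j]; ring
    _ ≤ ∑ j ∈ F, a j ^ 2 * (3 * SS) :=
        Finset.sum_le_sum fun j _ => mul_le_mul_of_nonneg_left (kernel_row j F) (sq_nonneg _)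
    _ = _ := by rw [← Finset.sum_mul]; ring

lemma uu_sub_sq_summable (n : ℤ) : Summable (fun j : ℤ => uu (j - n) ^ 2) :=
  ((Equiv.subRight n).summable_iff (f := fun m : ℤ => uu m ^ 2)).2 uu_sq_summable

lemma hilbert_row (a : ℤ → ℝ) (ha : Summable fun j => a j ^ 2) (n : ℤ) :
    Summable (fun j : ℤ => a j * uu (j - n)) := by
  refine Summable.of_norm_bounded (ha.add (uu_sub_sq_summable n)) fun j => ?_
  rw [Real.norm_eq_abs, abs_le]
  constructor <;> nlinarith [sq_nonneg (a j + uu (j - n)), sq_nonneg (a j - uu (j - n)),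
    sq_nonneg (a j), sq_nonneg (uu (j - n))]

lemma hilbert_l2 (a : ℤ → ℝ) (ha : Summable fun j => a j ^ 2) :
    Summable (fun n : ℤ => (∑' j : ℤ, a j * uu (j - n)) ^ 2) := by
  have hS : 0 ≤ SS := tsum_nonneg fun m => sq_nonneg _
  refine summable_of_sum_le (c := 3 * SS * ∑' j, a j ^ 2) (fun n => sq_nonneg _) fun G => ?_
  have ht : Tendsto (fun F : Finset ℤ => ∑ n ∈ G, (∑ j ∈ F, a j * uu (j - n)) ^ 2) atTop
      (𝓝 (∑ n ∈ G, (∑' j : ℤ, a j * uu (j - n)) ^ 2)) :=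
    tendsto_finsetSum G fun n _ => (hilbert_row a ha n).hasSum.pow 2
  refine le_of_tendsto' ht fun F => (hilbert_fin a F G).trans ?_
  exact mul_le_mul_of_nonneg_left (ha.sum_le_tsum F fun _ _ => sq_nonneg _) (by positivity)

lemma xx_summable (a : ℤ → ℝ) (ha : Summable fun j => a j ^ 2) :
    Summable (fun p : ℤ × ℤ => ((a p.2 - a p.1) * uu (p.2 - p.1)) ^ 2) := by
  have h1 : Summable (fun p : ℤ × ℤ => a p.1 ^ 2 * uu (p.2 - p.1) ^ 2) := by
    have := ha.mul_of_nonneg uu_sq_summable (fun _ => sq_nonneg _) (fun _ => sq_nonneg _)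
    exact ((Equiv.prodShear (Equiv.refl ℤ) (fun n : ℤ => Equiv.subRight n)).summable_iff).2 this
  have h2 : Summable (fun p : ℤ × ℤ => a p.2 ^ 2 * uu (p.2 - p.1) ^ 2) := by
    have := ((Equiv.prodComm ℤ ℤ).summable_iff).2 h1
    refine this.congr fun p => ?_
    simp only [Function.comp, Equiv.prodComm_apply, Prod.fst_swap, Prod.snd_swap]
    rw [show p.1 - p.2 = -(p.2 - p.1) by ring, uu_neg]; ring
  refine Summable.of_nonneg_of_le (fun _ => sq_nonneg _) (fun p => ?_) ((h1.add h2).mul_left 2)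
  nlinarith [mul_nonneg (sq_nonneg (uu (p.2 - p.1))) (sq_nonneg (a p.2 + a p.1))]

lemma log_rem_summable {ι : Type*} (x : ι → ℝ) (hx : Summable fun i => x i ^ 2) :
    Summable (fun i => Real.log (1 + x i) - x i) := by
  refine Summable.of_norm_bounded_eventually (hx.mul_left 2) ?_
  have ht := hx.tendsto_cofinite_zero
  filter_upwards [ht.eventually (gt_mem_nhds (show (0 : ℝ) < 1 / 4 by norm_num))] with i hi
  have h2 : -(1 / 2) < x i := by nlinarith
  have hpos : 0 < 1 + x i := by linarith
  have hu := Real.log_le_sub_one_of_pos hpos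
  have hl := Real.one_sub_inv_le_log_of_pos hpos
  have : -(2 * x i ^ 2) ≤ 1 - (1 + x i)⁻¹ - x i := by
    have e : 1 - (1 + x i)⁻¹ - x i = - (x i ^ 2 * (1 + x i)⁻¹) := by field_simp; ring
    have : (1 + x i)⁻¹ ≤ 2 := by
      rw [inv_le_comm₀ hpos (by norm_num)]; linarith
    rw [e]
    nlinarith [sq_nonneg (x i)]
  rw [Real.norm_eq_abs, abs_le]
  constructor
  · linarith
  · nlinarith [sq_nonneg (x i)]

lemma Icc_tendsto (n : ℤ) :
    Tendsto (fun N : ℕ => Finset.Icc (n - (N : ℤ)) (n + (N : ℤ))) atTop atTop := by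
  refine tendsto_atTop_finset_of_monotone ?_ ?_
  · intro N M h
    exact Finset.Icc_subset_Icc (by omega) (by omega)
  · intro j
    exact ⟨(j - n).natAbs, by rw [Finset.mem_Icc]; omega⟩

lemma sum_uu_Icc (n : ℤ) (N : ℕ) :
    ∑ j ∈ Finset.Icc (n - (N : ℤ)) (n + (N : ℤ)), uu (j - n) = 0 := by
  have h : ∑ j ∈ Finset.Icc (n - (N : ℤ)) (n + (N : ℤ)), uu (j - n) =
      ∑ j ∈ Finset.Icc (n - (N : ℤ)) (n + (N : ℤ)), - uu (j - n) := by
    refine Finset.sum_bij' (fun j _ => 2 * n - j) (fun j _ => 2 * n - j) ?_ ?_ ?_ ?_ ?_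
    · intro j hj; rw [Finset.mem_Icc] at *; omega
    · intro j hj; rw [Finset.mem_Icc] at *; omega
    · intro j hj; ring
    · intro j hj; ring
    · intro j hj
      rw [← uu_neg]; congr 1; ring
  rw [Finset.sum_neg_distrib] at h
  linarith

lemma memlp_two_iff (f : ℤ → ℝ) : Memℓp f 2 ↔ Summable fun n => f n ^ 2 := by
  rw [memℓp_gen_iff (by norm_num)]
  simp

/-- Given `ε ∈ ℓ²(ℤ)` with `τₙ = π(n − 1/2) + εₙ` strictly increasing, each ratio
`(τⱼ − τₙ)/(π(j−n))` (for `j ≠ n`) is positive, the symmetric limits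
`bₙ = lim_{N→∞} Σ_{1 ≤ |j−n| ≤ N} log((τⱼ − τₙ)/(π(j−n)))` exist, and `(bₙ) ∈ ℓ²(ℤ)`. -/
theorem stmt15 (ε : ℤ → ℝ) (hε : Memℓp ε 2)
    (hmono : StrictMono (fun n : ℤ => Real.pi * ((n : ℝ) - 1 / 2) + ε n)) :
    (∀ n j : ℤ, j ≠ n →
      0 < ((Real.pi * ((j : ℝ) - 1 / 2) + ε j) - (Real.pi * ((n : ℝ) - 1 / 2) + ε n)) /
        (Real.pi * ((j : ℝ) - (n : ℝ)))) ∧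
    ∃ b : ℤ → ℝ,
      (∀ n : ℤ, Tendsto (fun N : ℕ =>
          ∑ j ∈ (Finset.Icc (n - (N : ℤ)) (n + (N : ℤ))).erase n,
            Real.log (((Real.pi * ((j : ℝ) - 1 / 2) + ε j) -
              (Real.pi * ((n : ℝ) - 1 / 2) + ε n)) / (Real.pi * ((j : ℝ) - (n : ℝ)))))
        atTop (𝓝 (b n))) ∧
      Memℓp b 2 := by
  set a : ℤ → ℝ := fun n => ε n / Real.pi with ha_def
  have hpi := Real.pi_pos
  have ha : Summable fun j => a j ^ 2 := by
    have := ((memlp_two_iff ε).1 hε).mul_left ((Real.pi ^ 2)⁻¹)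
    refine this.congr fun n => ?_
    simp only [ha_def]; field_simp
  have hr : ∀ n j : ℤ, j ≠ n →
      ((Real.pi * ((j : ℝ) - 1 / 2) + ε j) - (Real.pi * ((n : ℝ) - 1 / 2) + ε n)) /
        (Real.pi * ((j : ℝ) - (n : ℝ))) = 1 + (a j - a n) * uu (j - n) := by
    intro n j hj
    have e : ((j : ℝ) - n) ≠ 0 := sub_ne_zero.2 (by exact_mod_cast hj)
    simp only [ha_def, uu]
    push_cast
    field_simp
    ring
  refine ⟨?_, ?_⟩
  · intro n j hj
    rcases lt_or_gt_of_ne hj with h | h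
    · have h1 := hmono h
      have h2 : (j : ℝ) < n := by exact_mod_cast h
      exact div_pos_of_neg_of_neg (sub_neg.2 h1) (mul_neg_of_pos_of_neg hpi (sub_neg.2 h2))
    · have h1 := hmono h
      have h2 : (n : ℝ) < j := by exact_mod_cast h
      exact div_pos (sub_pos.2 h1) (mul_pos hpi (sub_pos.2 h2))
  · have hg := log_rem_summable (fun p : ℤ × ℤ => (a p.2 - a p.1) * uu (p.2 - p.1))
      (xx_summable a ha)
    refine ⟨(fun n => ∑' j : ℤ, (Real.log (1 + (a j - a n) * uu (j - n)) -
        (a j - a n) * uu (j - n))) + (fun n => ∑' j : ℤ, a j * uu (j - n)), ?_, ?_⟩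
    · intro n
      have t1 := (hg.prod_factor n).hasSum.comp (Icc_tendsto n)
      have t2 := (hilbert_row a ha n).hasSum.comp (Icc_tendsto n)
      refine (t1.add t2).congr fun N => ?_
      have hs := sum_uu_Icc n N
      have e1 : ∑ j ∈ (Finset.Icc (n - (N : ℤ)) (n + (N : ℤ))).erase n,
            Real.log (((Real.pi * ((j : ℝ) - 1 / 2) + ε j) -
              (Real.pi * ((n : ℝ) - 1 / 2) + ε n)) / (Real.pi * ((j : ℝ) - (n : ℝ)))) =
          ∑ j ∈ Finset.Icc (n - (N : ℤ)) (n + (N : ℤ)),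
            Real.log (1 + (a j - a n) * uu (j - n)) := by
        rw [Finset.sum_congr rfl fun j hj => by rw [hr n j (Finset.ne_of_mem_erase hj)]]
        refine Finset.sum_erase _ ?_
        simp
      rw [e1]
      simp only [Function.comp]
      rw [← Finset.sum_add_distrib]
      have e2 : ∑ j ∈ Finset.Icc (n - (N : ℤ)) (n + (N : ℤ)), a n * uu (j - n) = 0 := by
        rw [← Finset.mul_sum, hs, mul_zero]
      rw [← add_zero (∑ j ∈ Finset.Icc (n - (N : ℤ)) (n + (N : ℤ)),
        Real.log (1 + (a j - a n) * uu (j - n))), ← e2, ← Finset.sum_add_distrib]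
      refine Finset.sum_congr rfl fun j _ => ?_
      ring
    · refine Memℓp.add ?_ ((memlp_two_iff _).2 (hilbert_l2 a ha))
      have h1 : Memℓp (fun n => ∑' j : ℤ, (Real.log (1 + (a j - a n) * uu (j - n)) -
        (a j - a n) * uu (j - n))) 1 := by
        rw [memℓp_gen_iff (by norm_num)]
        simpa using hg.prod.abs
      exact h1.of_exponent_ge (by norm_num)
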